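/- There exists a constant C_s > 0, independent of m, such that for every integer m ≥ 1 and every axially symmetric function f that is continuously differentiable on a neighborhood of the closure of D_m, (∫_{D_m} |f|^{13/5} dx)^{10/13} ≤ C_s ∫_{D_m} ( |∇f|² + f²/r² ) dx. -/

import Mathlib

noncomputable section

open Real MeasureTheory Set

/-- Inner radius of the `j`-th rectangle: `r_j = 2^(-j)`. -/
def rW (j : ℕ) : ℝ := (2 : ℝ) ^ (-(j : ℝ))

/-- Height of the `j`-th rectangle: `h_j = 2^(-β (j-1))`. -/
def hH (β : ℝ) (j : ℕ) : ℝ := (2 : ℝ) ^ (-β * ((j : ℝ) - 1))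

/-- The rectangle `S_j` in the `(r, x₃)` cross-section. -/
def Srect (β : ℝ) (j : ℕ) : Set (ℝ × ℝ) :=
  {p : ℝ × ℝ | rW j ≤ p.1 ∧ p.1 < rW (j - 1) ∧ 0 < p.2 ∧ p.2 < hH β j}

/-- The `(r, x₃)` cross-section of the domain `D_m`. -/
def Ddom (β : ℝ) (m : ℕ) : Set (ℝ × ℝ) := ⋃ j ∈ Finset.Icc 1 m, Srect β j

/-- The horizontal part `∂^H D_m` of the boundary of `D_m` (where `x₃` is locally constant). -/
def bdH (β : ℝ) (m : ℕ) : Set (ℝ × ℝ) :=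
  {p : ℝ × ℝ | p.2 = 0 ∧ rW m ≤ p.1 ∧ p.1 ≤ 1} ∪
    ⋃ j ∈ Finset.Icc 1 m,
      {p : ℝ × ℝ | p.2 = hH β j ∧ rW j ≤ p.1 ∧ p.1 ≤ rW (j - 1)}

/-- The vertical part `∂^V D_m` of the boundary of `D_m` (where `r` is locally constant). -/
def bdV (β : ℝ) (m : ℕ) : Set (ℝ × ℝ) :=
  {p : ℝ × ℝ | p.1 = 1 ∧ 0 ≤ p.2 ∧ p.2 ≤ 1} ∪
    {p : ℝ × ℝ | p.1 = rW m ∧ 0 ≤ p.2 ∧ p.2 ≤ hH β m} ∪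
    ⋃ j ∈ Finset.Icc 1 (m - 1),
      {p : ℝ × ℝ | p.1 = rW j ∧ hH β (j + 1) ≤ p.2 ∧ p.2 ≤ hH β j}

/-- The full boundary `∂ D_m` of `D_m`. -/
def bdD (β : ℝ) (m : ℕ) : Set (ℝ × ℝ) := bdH β m ∪ bdV β m

/-- The corner points of the polygonal cross-section of `D_m`
(i.e. the corner circles of the 3D domain). -/
def cornerSet (β : ℝ) (m : ℕ) : Set (ℝ × ℝ) :=
  ({(rW m, 0), ((1 : ℝ), 0), ((1 : ℝ), (1 : ℝ)), (rW m, hH β m)} : Set (ℝ × ℝ)) ∪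
    ⋃ j ∈ Finset.Icc 1 (m - 1),
      ({(rW j, hH β j), (rW j, hH β (j + 1))} : Set (ℝ × ℝ))

/-- Radial partial derivative `∂_r`. -/
def pdr (F : ℝ × ℝ → ℝ) (p : ℝ × ℝ) : ℝ := deriv (fun r => F (r, p.2)) p.1

/-- Vertical partial derivative `∂_{x₃}`. -/
def pdz (F : ℝ × ℝ → ℝ) (p : ℝ × ℝ) : ℝ := deriv (fun z => F (p.1, z)) p.2

/-- The axially symmetric Laplacian `Δ = ∂_r² + (1/r) ∂_r + ∂_{x₃}²`. -/
def cylLap (F : ℝ × ℝ → ℝ) (p : ℝ × ℝ) : ℝ :=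
  pdr (pdr F) p + (1 / p.1) * pdr F p + pdz (pdz F) p

/-- The integral of an axially symmetric function over the 3-dimensional domain `D_m`,
computed in the cross-section: `∫_{D_m} f dx = 2π ∬ F r dr dx₃`. -/
def cylIntegral (β : ℝ) (m : ℕ) (F : ℝ × ℝ → ℝ) : ℝ :=
  ∫ p in Ddom β m, F p * (2 * π * p.1)

/-- The vertical cross-section segment `D_m ∩ {r = c}` of the cross-section. -/
def vertSeg (β : ℝ) (m : ℕ) (c : ℝ) : Set ℝ := {z : ℝ | (c, z) ∈ Ddom β m}

/-!
On a rectangle, the fundamental theorem of calculus along horizontal and vertical slices and Fubini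
bound `∫ u²` by `(∫ |u|/(b - a) + |∂₁u|) (∫ |u|/(d - c) + |∂₂u|)`. For `u = F²`, the inequality
`2 |F ∂F| ≤ r (|∂F|² + F²/r²)` turns both factors into the weighted energy, so `∫ F⁴ r` is at most a
multiple of the squared energy. On `S_j` the multiple is of order `r_{j-1} + r_{j-1}²/h_j`, hence
bounded as long as `β ≤ 2`, and summing the squares over `j` costs nothing: the `L⁴` norm is
bounded uniformly in `m`. The `L²` norm is bounded because `r ≤ 1`, and Hölder's inequality gives
the exponents in between.
-/

section SobolevOnRectangle

variable {E : Type*} [NormedAddCommGroup E] [NormedSpace ℝ E] [CompleteSpace E]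

theorem norm_sub_le_setIntegral_norm_deriv {g g' : ℝ → E} {a b x y : ℝ}
    (hg : ContinuousOn g (Icc a b)) (hderiv : ∀ t ∈ Ioo a b, HasDerivAt g (g' t) t)
    (hg' : IntegrableOn g' (Icc a b)) (hx : x ∈ Icc a b) (hy : y ∈ Icc a b) :
    ‖g x - g y‖ ≤ ∫ t in Icc a b, ‖g' t‖ := by
  have hsub : uIcc y x ⊆ Icc a b := ordConnected_Icc.uIcc_subset hy hx
  have hftc : ∫ t in y..x, g' t = g x - g y :=
    intervalIntegral.integral_eq_sub_of_hasDeriv_right (hg.mono hsub)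
      (fun t ht => (hderiv t ⟨(le_min hy.1 hx.1).trans_lt ht.1,
        ht.2.trans_le (max_le hy.2 hx.2)⟩).hasDerivWithinAt)
      (hg'.mono_set hsub).intervalIntegrable
  calc ‖g x - g y‖ = ‖∫ t in y..x, g' t‖ := by rw [hftc]
    _ ≤ ∫ t in uIoc y x, ‖g' t‖ := intervalIntegral.norm_integral_le_integral_norm_uIoc
    _ ≤ ∫ t in Icc a b, ‖g' t‖ :=
      setIntegral_mono_set hg'.norm (ae_of_all _ fun _ => norm_nonneg _)
        (uIoc_subset_uIcc.trans hsub).eventuallyLE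

theorem norm_le_setIntegral_norm_div_add_norm_deriv {g g' : ℝ → E} {a b x : ℝ} (hab : a < b)
    (hg : ContinuousOn g (Icc a b)) (hderiv : ∀ t ∈ Ioo a b, HasDerivAt g (g' t) t)
    (hg' : IntegrableOn g' (Icc a b)) (hx : x ∈ Icc a b) :
    ‖g x‖ ≤ ∫ t in Icc a b, (‖g t‖ / (b - a) + ‖g' t‖) := by
  have hba : 0 < b - a := sub_pos.2 hab
  have hgi : IntegrableOn (fun t => ‖g t‖) (Icc a b) := hg.norm.integrableOn_Icc
  set V := ∫ t in Icc a b, ‖g' t‖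
  have hpointwise : ∀ t ∈ Icc a b, ‖g x‖ - V ≤ ‖g t‖ := fun t ht => by
    linarith [norm_sub_norm_le (g x) (g t),
      norm_sub_le_setIntegral_norm_deriv hg hderiv hg' hx ht]
  have haverage : (‖g x‖ - V) * (b - a) ≤ ∫ t in Icc a b, ‖g t‖ := by
    have hmono := setIntegral_mono_on (integrableOn_const (by simp)) hgi measurableSet_Icc
      hpointwise
    rwa [setIntegral_const, Real.volume_real_Icc_of_le hab.le, smul_eq_mul, mul_comm] at hmono
  rw [integral_add (hgi.div_const _) hg'.norm, integral_div]
  linarith [(le_div_iff₀ hba).2 haverage]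

theorem setIntegral_norm_sq_le_mul {F F₁ F₂ : ℝ × ℝ → E} {a b c d : ℝ} (hab : a < b) (hcd : c < d)
    (hF : ContinuousOn F (Icc a b ×ˢ Icc c d))
    (hF₁ : ContinuousOn F₁ (Icc a b ×ˢ Icc c d)) (hF₂ : ContinuousOn F₂ (Icc a b ×ˢ Icc c d))
    (hderiv₁ : ∀ p ∈ Icc a b ×ˢ Icc c d, HasDerivAt (fun x => F (x, p.2)) (F₁ p) p.1)
    (hderiv₂ : ∀ p ∈ Icc a b ×ˢ Icc c d, HasDerivAt (fun y => F (p.1, y)) (F₂ p) p.2) :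
    ∫ p in Icc a b ×ˢ Icc c d, ‖F p‖ ^ 2 ≤
      (∫ p in Icc a b ×ˢ Icc c d, (‖F p‖ / (b - a) + ‖F₁ p‖)) *
        ∫ p in Icc a b ×ˢ Icc c d, (‖F p‖ / (d - c) + ‖F₂ p‖) := by
  have hK : IsCompact (Icc a b ×ˢ Icc c d) := isCompact_Icc.prod isCompact_Icc
  have hi : IntegrableOn (fun p => ‖F p‖ ^ 2) (Icc a b ×ˢ Icc c d) :=
    (hF.norm.pow 2).integrableOn_compact hK
  have hi₁ : IntegrableOn (fun p => ‖F p‖ / (b - a) + ‖F₁ p‖) (Icc a b ×ˢ Icc c d) :=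
    ((hF.norm.div_const _).add hF₁.norm).integrableOn_compact hK
  have hi₂ : IntegrableOn (fun p => ‖F p‖ / (d - c) + ‖F₂ p‖) (Icc a b ×ˢ Icc c d) :=
    ((hF.norm.div_const _).add hF₂.norm).integrableOn_compact hK
  have hmem : ∀ᵐ p ∂(volume : Measure (ℝ × ℝ)).restrict (Icc a b ×ˢ Icc c d),
      p ∈ Icc a b ×ˢ Icc c d := ae_restrict_mem hK.measurableSet
  rw [IntegrableOn, Measure.volume_eq_prod, ← Measure.prod_restrict] at hi hi₁ hi₂
  rw [Measure.volume_eq_prod, ← Measure.prod_restrict] at hmem ⊢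
  rw [integral_prod_symm _ hi₁, integral_prod _ hi₂, mul_comm, ← integral_prod_mul]
  refine integral_mono_ae hi (hi₂.integral_prod_left.mul_prod hi₁.integral_prod_right) ?_
  filter_upwards [hmem] with ⟨x, y⟩ ⟨hx, hy⟩
  have hslice₁ : ‖F (x, y)‖ ≤ ∫ s in Icc a b, (‖F (s, y)‖ / (b - a) + ‖F₁ (s, y)‖) :=
    norm_le_setIntegral_norm_div_add_norm_deriv (g := fun s => F (s, y))
      (g' := fun s => F₁ (s, y)) hab
      (hF.comp (by fun_prop) fun s hs => ⟨hs, hy⟩)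
      (fun s hs => hderiv₁ (s, y) ⟨Ioo_subset_Icc_self hs, hy⟩)
      (ContinuousOn.integrableOn_Icc (hF₁.comp (by fun_prop) fun s hs => ⟨hs, hy⟩)) hx
  have hslice₂ : ‖F (x, y)‖ ≤ ∫ t in Icc c d, (‖F (x, t)‖ / (d - c) + ‖F₂ (x, t)‖) :=
    norm_le_setIntegral_norm_div_add_norm_deriv (g := fun t => F (x, t))
      (g' := fun t => F₂ (x, t)) hcd
      (hF.comp (by fun_prop) fun t ht => ⟨hx, ht⟩)
      (fun t ht => hderiv₂ (x, t) ⟨hx, Ioo_subset_Icc_self ht⟩)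
      (ContinuousOn.integrableOn_Icc (hF₂.comp (by fun_prop) fun t ht => ⟨hx, ht⟩)) hy
  rw [sq]
  exact mul_le_mul hslice₂ hslice₁ (norm_nonneg _) ((norm_nonneg _).trans hslice₂)

end SobolevOnRectangle

section Interpolation

variable {α : Type*} [MeasurableSpace α] {μ : Measure α}

theorem integral_rpow_mul_rpow_le {f g : α → ℝ} (hf₀ : 0 ≤ᵐ[μ] f) (hg₀ : 0 ≤ᵐ[μ] g)
    (hf : Integrable f μ) (hg : Integrable g μ) {s t : ℝ} (hs : 0 ≤ s) (ht : 0 ≤ t)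
    (hst : s + t = 1) :
    ∫ x, f x ^ s * g x ^ t ∂μ ≤ (∫ x, f x ∂μ) ^ s * (∫ x, g x ∂μ) ^ t := by
  have hfg₀ : 0 ≤ᵐ[μ] fun x => f x ^ s * g x ^ t := by
    filter_upwards [hf₀, hg₀] with x hfx hgx
    exact mul_nonneg (rpow_nonneg hfx s) (rpow_nonneg hgx t)
  have hofReal : ∀ᵐ x ∂μ, ENNReal.ofReal (f x ^ s * g x ^ t) =
      ENNReal.ofReal (f x) ^ s * ENNReal.ofReal (g x) ^ t := by
    filter_upwards [hf₀, hg₀] with x hfx hgx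
    rw [ENNReal.ofReal_mul (rpow_nonneg hfx s), ENNReal.ofReal_rpow_of_nonneg hfx hs,
      ENNReal.ofReal_rpow_of_nonneg hgx ht]
  have hfm := hf.aestronglyMeasurable.aemeasurable
  have hgm := hg.aestronglyMeasurable.aemeasurable
  rw [integral_eq_lintegral_of_nonneg_ae hfg₀
      ((hfm.pow_const s).mul (hgm.pow_const t)).aestronglyMeasurable, lintegral_congr_ae hofReal,
    integral_eq_lintegral_of_nonneg_ae hf₀ hf.aestronglyMeasurable,
    integral_eq_lintegral_of_nonneg_ae hg₀ hg.aestronglyMeasurable,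
    ENNReal.toReal_rpow, ENNReal.toReal_rpow, ← ENNReal.toReal_mul]
  refine ENNReal.toReal_mono (ENNReal.mul_ne_top ?_ ?_)
    (ENNReal.lintegral_mul_norm_pow_le hfm.ennreal_ofReal hgm.ennreal_ofReal hs ht hst)
  · exact ENNReal.rpow_ne_top_of_nonneg hs (hasFiniteIntegral_iff_ofReal hf₀ |>.1 hf.2).ne
  · exact ENNReal.rpow_ne_top_of_nonneg ht (hasFiniteIntegral_iff_ofReal hg₀ |>.1 hg.2).ne

theorem integral_abs_rpow_mul_le {f w : α → ℝ} (hw : 0 ≤ᵐ[μ] w) {p q s t : ℝ}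
    (hp : 0 ≤ p) (hq : 0 ≤ q) (hs : 0 ≤ s) (ht : 0 ≤ t) (hst : s + t = 1)
    (hfp : Integrable (fun x => |f x| ^ p * w x) μ)
    (hfq : Integrable (fun x => |f x| ^ q * w x) μ) :
    ∫ x, |f x| ^ (p * s + q * t) * w x ∂μ ≤
      (∫ x, |f x| ^ p * w x ∂μ) ^ s * (∫ x, |f x| ^ q * w x ∂μ) ^ t := by
  have hnonneg (e : ℝ) : 0 ≤ᵐ[μ] fun x => |f x| ^ e * w x := by
    filter_upwards [hw] with x hwx
    exact mul_nonneg (by positivity) hwx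
  refine le_of_eq_of_le (integral_congr_ae ?_)
    (integral_rpow_mul_rpow_le (hnonneg p) (hnonneg q) hfp hfq hs ht hst)
  filter_upwards [hw] with x hwx
  have hweight : w x = w x ^ s * w x ^ t := by
    rw [← rpow_add_of_nonneg hwx hs ht, hst, rpow_one]
  rw [mul_rpow (by positivity) hwx, mul_rpow (by positivity) hwx, ← rpow_mul (abs_nonneg _),
    ← rpow_mul (abs_nonneg _), rpow_add_of_nonneg (abs_nonneg _) (by positivity) (by positivity),
    mul_mul_mul_comm, ← hweight]

end Interpolation

section WeightedEnergy

/-- The density `|∇f|² + f²/r²` of the weighted Dirichlet energy of the axially symmetric function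
with profile `F`. It is taken with respect to the three-dimensional Lebesgue measure, so its
integrals over the cross-section carry the weight `2πr`. -/
def weightedEnergy (F : ℝ × ℝ → ℝ) (p : ℝ × ℝ) : ℝ :=
  pdr F p ^ 2 + pdz F p ^ 2 + F p ^ 2 / p.1 ^ 2

variable {F : ℝ × ℝ → ℝ} {p : ℝ × ℝ}

theorem weightedEnergy_nonneg : 0 ≤ weightedEnergy F p := by
  unfold weightedEnergy
  positivity

theorem pdr_sq_add_le_weightedEnergy : pdr F p ^ 2 + F p ^ 2 / p.1 ^ 2 ≤ weightedEnergy F p := by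
  unfold weightedEnergy
  linarith [sq_nonneg (pdz F p)]

theorem pdz_sq_add_le_weightedEnergy : pdz F p ^ 2 + F p ^ 2 / p.1 ^ 2 ≤ weightedEnergy F p := by
  unfold weightedEnergy
  linarith [sq_nonneg (pdr F p)]

theorem sq_le_weightedEnergy (hp₀ : 0 < p.1) (hp₁ : p.1 ≤ 1) : F p ^ 2 ≤ weightedEnergy F p :=
  calc F p ^ 2 ≤ F p ^ 2 / p.1 ^ 2 :=
        le_div_self (sq_nonneg _) (by positivity) (pow_le_one₀ hp₀.le hp₁)
    _ ≤ weightedEnergy F p :=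
        le_trans (le_add_of_nonneg_left (sq_nonneg _)) pdr_sq_add_le_weightedEnergy

theorem hasDerivAt_pdr (hF : DifferentiableAt ℝ F p) :
    HasDerivAt (fun r => F (r, p.2)) (pdr F p) p.1 :=
  (DifferentiableAt.comp (g := F) (f := fun r => (r, p.2)) p.1 hF (by fun_prop)).hasDerivAt

theorem hasDerivAt_pdz (hF : DifferentiableAt ℝ F p) :
    HasDerivAt (fun z => F (p.1, z)) (pdz F p) p.2 :=
  (DifferentiableAt.comp (g := F) (f := fun z => (p.1, z)) p.2 hF (by fun_prop)).hasDerivAt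

theorem pdr_eq_fderiv (hF : DifferentiableAt ℝ F p) : pdr F p = fderiv ℝ F p (1, 0) :=
  (HasFDerivAt.comp_hasDerivAt (f := fun r => (r, p.2)) p.1 hF.hasFDerivAt
    ((hasDerivAt_id p.1).prodMk (hasDerivAt_const p.1 p.2))).deriv

theorem pdz_eq_fderiv (hF : DifferentiableAt ℝ F p) : pdz F p = fderiv ℝ F p (0, 1) :=
  (HasFDerivAt.comp_hasDerivAt (f := fun z => (p.1, z)) p.2 hF.hasFDerivAt
    ((hasDerivAt_const p.2 p.1).prodMk (hasDerivAt_id p.2))).deriv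

theorem eventually_differentiableAt (hF : ContDiffAt ℝ 1 F p) :
    ∀ᶠ x in nhds p, DifferentiableAt ℝ F x :=
  (hF.eventually (by simp)).mono fun _ hx => hx.differentiableAt one_ne_zero

theorem continuousAt_pdr (hF : ContDiffAt ℝ 1 F p) : ContinuousAt (pdr F) p :=
  ((hF.continuousAt_fderiv one_ne_zero).clm_apply continuousAt_const).congr
    ((eventually_differentiableAt hF).mono fun _ hx => (pdr_eq_fderiv hx).symm)

theorem continuousAt_pdz (hF : ContDiffAt ℝ 1 F p) : ContinuousAt (pdz F) p :=
  ((hF.continuousAt_fderiv one_ne_zero).clm_apply continuousAt_const).congr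
    ((eventually_differentiableAt hF).mono fun _ hx => (pdz_eq_fderiv hx).symm)

theorem continuousAt_weightedEnergy (hF : ContDiffAt ℝ 1 F p) (hp : p.1 ≠ 0) :
    ContinuousAt (weightedEnergy F) p :=
  (((continuousAt_pdr hF).pow 2).add ((continuousAt_pdz hF).pow 2)).add
    ((hF.continuousAt.pow 2).div (by fun_prop) (pow_ne_zero 2 hp))

theorem sq_div_add_abs_two_mul_le {r l f u G : ℝ} (hr : 0 < r) (hl : 0 < l)
    (hG : u ^ 2 + f ^ 2 / r ^ 2 ≤ G) : f ^ 2 / l + |2 * f * u| ≤ (1 + r / l) * (r * G) := by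
  have hsq : f ^ 2 / r ^ 2 ≤ G := by linarith [sq_nonneg u]
  have hmass : f ^ 2 / l ≤ r / l * (r * G) := by
    calc f ^ 2 / l = r / l * (r * (f ^ 2 / r ^ 2)) := by field_simp
      _ ≤ r / l * (r * G) := by gcongr
  have hcross : |2 * f * u| ≤ r * G := by
    calc |2 * f * u| = r * (2 * (|u| * (|f| / r))) := by
          rw [abs_mul, abs_mul, abs_two]; field_simp
      _ ≤ r * (|u| ^ 2 + (|f| / r) ^ 2) := by
          gcongr; linarith [two_mul_le_add_sq |u| (|f| / r)]
      _ = r * (u ^ 2 + f ^ 2 / r ^ 2) := by rw [div_pow, sq_abs, sq_abs]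
      _ ≤ r * G := by gcongr
  linarith

variable {a b c d : ℝ}

theorem setIntegral_sq_div_add_abs_le (ha : 0 < a)
    (hF : ∀ p ∈ Icc a b ×ˢ Icc c d, ContDiffAt ℝ 1 F p) {u : ℝ × ℝ → ℝ}
    (hu : ContinuousOn u (Icc a b ×ˢ Icc c d))
    (huE : ∀ p ∈ Icc a b ×ˢ Icc c d, u p ^ 2 + F p ^ 2 / p.1 ^ 2 ≤ weightedEnergy F p)
    {l : ℝ} (hl : 0 < l) :
    ∫ p in Icc a b ×ˢ Icc c d, (F p ^ 2 / l + |2 * F p * u p|) ≤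
      (1 + b / l) / (2 * π) *
        ∫ p in Icc a b ×ˢ Icc c d, weightedEnergy F p * (2 * π * p.1) := by
  have hK : IsCompact (Icc a b ×ˢ Icc c d) := isCompact_Icc.prod isCompact_Icc
  have hFc : ContinuousOn F (Icc a b ×ˢ Icc c d) :=
    fun p hp => (hF p hp).continuousAt.continuousWithinAt
  have hEc : ContinuousOn (weightedEnergy F) (Icc a b ×ˢ Icc c d) := fun p hp =>
    (continuousAt_weightedEnergy (hF p hp) (ha.trans_le hp.1.1).ne').continuousWithinAt
  rw [← integral_const_mul]
  refine setIntegral_mono_on (ContinuousOn.integrableOn_compact hK (by fun_prop))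
    (ContinuousOn.integrableOn_compact hK (by fun_prop)) hK.measurableSet fun p hp => ?_
  have hr : 0 < p.1 := ha.trans_le hp.1.1
  have hE : 0 ≤ weightedEnergy F p := weightedEnergy_nonneg
  calc F p ^ 2 / l + |2 * F p * u p| ≤ (1 + p.1 / l) * (p.1 * weightedEnergy F p) :=
        sq_div_add_abs_two_mul_le hr hl (huE p hp)
    _ ≤ (1 + b / l) * (p.1 * weightedEnergy F p) := by gcongr; exact hp.1.2
    _ = (1 + b / l) / (2 * π) * (weightedEnergy F p * (2 * π * p.1)) := by field_simp

theorem setIntegral_pow_four_le (ha : 0 < a) (hab : a < b) (hcd : c < d)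
    (hF : ∀ p ∈ Icc a b ×ˢ Icc c d, ContDiffAt ℝ 1 F p) :
    ∫ p in Icc a b ×ˢ Icc c d, F p ^ 4 ≤
      (1 + b / (b - a)) * (1 + b / (d - c)) / (2 * π) ^ 2 *
        (∫ p in Icc a b ×ˢ Icc c d, weightedEnergy F p * (2 * π * p.1)) ^ 2 := by
  have hFc : ContinuousOn F (Icc a b ×ˢ Icc c d) :=
    fun p hp => (hF p hp).continuousAt.continuousWithinAt
  have hrc : ContinuousOn (pdr F) (Icc a b ×ˢ Icc c d) :=
    fun p hp => (continuousAt_pdr (hF p hp)).continuousWithinAt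
  have hzc : ContinuousOn (pdz F) (Icc a b ×ˢ Icc c d) :=
    fun p hp => (continuousAt_pdz (hF p hp)).continuousWithinAt
  have hsobolev := setIntegral_norm_sq_le_mul (F := fun p => F p ^ 2)
    (F₁ := fun p => 2 * F p * pdr F p) (F₂ := fun p => 2 * F p * pdz F p) hab hcd
    (by fun_prop) (by fun_prop) (by fun_prop)
    (fun p hp => by
      simpa using (hasDerivAt_pdr ((hF p hp).differentiableAt one_ne_zero)).fun_pow 2)
    (fun p hp => by
      simpa using (hasDerivAt_pdz ((hF p hp).differentiableAt one_ne_zero)).fun_pow 2)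
  simp only [norm_eq_abs, abs_sq, ← pow_mul, Nat.reduceMul] at hsobolev
  have hradial := setIntegral_sq_div_add_abs_le ha hF hrc
    (fun _ _ => pdr_sq_add_le_weightedEnergy) (sub_pos.2 hab)
  have hvertical := setIntegral_sq_div_add_abs_le ha hF hzc
    (fun _ _ => pdz_sq_add_le_weightedEnergy) (sub_pos.2 hcd)
  have hba : 0 < b - a := sub_pos.2 hab
  have hdc : 0 < d - c := sub_pos.2 hcd
  refine hsobolev.trans ((mul_le_mul hradial hvertical (by positivity)
    (le_trans (by positivity) hradial)).trans_eq ?_)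
  field_simp

theorem setIntegral_pow_four_mul_weight_le (ha : 0 < a) (hab : a < b) (hcd : c < d)
    (hF : ∀ p ∈ Icc a b ×ˢ Icc c d, ContDiffAt ℝ 1 F p) :
    ∫ p in Icc a b ×ˢ Icc c d, F p ^ 4 * (2 * π * p.1) ≤
      b * (1 + b / (b - a)) * (1 + b / (d - c)) / (2 * π) *
        (∫ p in Icc a b ×ˢ Icc c d, weightedEnergy F p * (2 * π * p.1)) ^ 2 := by
  have hb : 0 < b := ha.trans hab
  have hK : IsCompact (Icc a b ×ˢ Icc c d) := isCompact_Icc.prod isCompact_Icc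
  have hFc : ContinuousOn F (Icc a b ×ˢ Icc c d) :=
    fun p hp => (hF p hp).continuousAt.continuousWithinAt
  calc ∫ p in Icc a b ×ˢ Icc c d, F p ^ 4 * (2 * π * p.1)
      ≤ ∫ p in Icc a b ×ˢ Icc c d, F p ^ 4 * (2 * π * b) :=
        setIntegral_mono_on (ContinuousOn.integrableOn_compact hK (by fun_prop))
          (ContinuousOn.integrableOn_compact hK (by fun_prop)) hK.measurableSet
          fun p hp => by gcongr; exact hp.1.2
    _ = (2 * π * b) * ∫ p in Icc a b ×ˢ Icc c d, F p ^ 4 := by rw [integral_mul_const, mul_comm]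
    _ ≤ (2 * π * b) * ((1 + b / (b - a)) * (1 + b / (d - c)) / (2 * π) ^ 2 *
          (∫ p in Icc a b ×ˢ Icc c d, weightedEnergy F p * (2 * π * p.1)) ^ 2) :=
        mul_le_mul_of_nonneg_left (setIntegral_pow_four_le ha hab hcd hF) (by positivity)
    _ = _ := by field_simp

end WeightedEnergy

section SteppedDomain

variable {β : ℝ} {m j : ℕ}

theorem rW_pos (j : ℕ) : 0 < rW j := by
  unfold rW
  positivity

theorem hH_pos (β : ℝ) (j : ℕ) : 0 < hH β j := by
  unfold hH
  positivity

theorem rW_zero : rW 0 = 1 := by simp [rW]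

theorem rW_antitone : Antitone rW := fun _ _ hij =>
  rpow_le_rpow_of_exponent_le one_le_two (neg_le_neg (Nat.cast_le.2 hij))

theorem rW_pred (hj : 1 ≤ j) : rW (j - 1) = 2 * rW j := by
  rw [rW, rW, Nat.cast_pred hj, neg_sub, sub_eq_add_neg, rpow_add two_pos, rpow_one]

theorem rW_pred_sq_le_hH (hβ : β ≤ 2) (hj : 1 ≤ j) : rW (j - 1) ^ 2 ≤ hH β j := by
  rw [rW, hH, Nat.cast_pred hj, ← rpow_mul_natCast two_pos.le]
  refine rpow_le_rpow_of_exponent_le one_le_two ?_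
  have hj' : (0 : ℝ) ≤ j - 1 := sub_nonneg.2 (Nat.one_le_cast.2 hj)
  push_cast
  linarith [mul_le_mul_of_nonneg_right hβ hj']

theorem Srect_eq_prod : Srect β j = Ico (rW j) (rW (j - 1)) ×ˢ Ioo 0 (hH β j) := by
  ext p
  simp only [Srect, mem_ofPred_eq, mem_prod, mem_Ico, mem_Ioo, and_assoc]

theorem measurableSet_Srect : MeasurableSet (Srect β j) := by
  rw [Srect_eq_prod]
  exact measurableSet_Ico.prod measurableSet_Ioo

theorem pairwise_disjoint_Srect : Pairwise (Function.onFun Disjoint (Srect β)) := fun i j hij => by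
  simp only [Function.onFun, Srect_eq_prod]
  exact (rW_antitone.pairwise_disjoint_on_Ico_pred hij).set_prod_left _ _

theorem closure_Srect (hj : 1 ≤ j) :
    closure (Srect β j) = Icc (rW j) (rW (j - 1)) ×ˢ Icc 0 (hH β j) := by
  have hlt : rW j < rW (j - 1) := by linarith [rW_pred hj, rW_pos j]
  rw [Srect_eq_prod, closure_prod_eq, closure_Ico hlt.ne, closure_Ioo (hH_pos β j).ne]

theorem closure_Srect_ae_eq (hj : 1 ≤ j) : closure (Srect β j) =ᵐ[volume] Srect β j := by
  rw [closure_Srect hj, Srect_eq_prod]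
  exact Measure.set_prod_ae_eq Ico_ae_eq_Icc.symm Ioo_ae_eq_Icc.symm

theorem Srect_subset_Ddom (hj : j ∈ Finset.Icc 1 m) : Srect β j ⊆ Ddom β m :=
  subset_biUnion_of_mem (u := fun j => Srect β j) hj

theorem measurableSet_Ddom : MeasurableSet (Ddom β m) :=
  Finset.measurableSet_biUnion _ fun _ _ => measurableSet_Srect

theorem isCompact_closure_Ddom : IsCompact (closure (Ddom β m)) := by
  refine Bornology.IsBounded.isCompact_closure
    ((Bornology.isBounded_biUnion_finset _).2 fun j _ => ?_)
  rw [Srect_eq_prod]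
  exact (Metric.isBounded_Ico _ _).prod (Metric.isBounded_Ioo _ _)

theorem fst_mem_of_mem_closure_Ddom {p : ℝ × ℝ} (hp : p ∈ closure (Ddom β m)) :
    p.1 ∈ Icc (rW m) 1 := by
  have hclosed : IsClosed (Prod.fst ⁻¹' Icc (rW m) 1 : Set (ℝ × ℝ)) :=
    isClosed_Icc.preimage continuous_fst
  refine closure_minimal (iUnion₂_subset fun j hj q hq => ?_) hclosed hp
  exact ⟨(rW_antitone (Finset.mem_Icc.1 hj).2).trans hq.1,
    hq.2.1.le.trans ((rW_antitone (Nat.zero_le _)).trans_eq rW_zero)⟩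

theorem fst_pos_of_mem_closure_Ddom {p : ℝ × ℝ} (hp : p ∈ closure (Ddom β m)) : 0 < p.1 :=
  (rW_pos m).trans_le (fst_mem_of_mem_closure_Ddom hp).1

theorem integrableOn_Ddom {f : ℝ × ℝ → ℝ} (hf : ContinuousOn f (closure (Ddom β m))) :
    IntegrableOn f (Ddom β m) :=
  (hf.integrableOn_compact isCompact_closure_Ddom).mono_set subset_closure

theorem setIntegral_Ddom {f : ℝ × ℝ → ℝ} (hf : IntegrableOn f (Ddom β m)) :
    ∫ p in Ddom β m, f p = ∑ j ∈ Finset.Icc 1 m, ∫ p in Srect β j, f p :=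
  integral_biUnion_finset _ (fun _ _ => measurableSet_Srect)
    (pairwise_disjoint_Srect.set_pairwise _) fun _ hj => hf.mono_set (Srect_subset_Ddom hj)

theorem cylIntegral_nonneg {f : ℝ × ℝ → ℝ} (hf : ∀ p, 0 ≤ f p) : 0 ≤ cylIntegral β m f :=
  setIntegral_nonneg measurableSet_Ddom fun p hp => by
    have hr := fst_pos_of_mem_closure_Ddom (subset_closure hp)
    exact mul_nonneg (hf p) (by positivity)

variable {F : ℝ × ℝ → ℝ}

theorem setIntegral_Srect_pow_four_le (hβ : β ≤ 2) (hj : 1 ≤ j)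
    (hF : ∀ p ∈ closure (Srect β j), ContDiffAt ℝ 1 F p) :
    ∫ p in Srect β j, F p ^ 4 * (2 * π * p.1) ≤
      (∫ p in Srect β j, weightedEnergy F p * (2 * π * p.1)) ^ 2 := by
  have hpred := rW_pred hj
  have hb : 0 < rW (j - 1) := rW_pos _
  have hb₁ : rW (j - 1) ≤ 1 := (rW_antitone (Nat.zero_le _)).trans_eq rW_zero
  have hratio : rW (j - 1) / (rW (j - 1) - rW j) = 2 := by
    rw [hpred, two_mul, add_sub_cancel_right, ← two_mul, mul_div_cancel_right₀ _ (rW_pos j).ne']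
  have haspect : rW (j - 1) * (rW (j - 1) / (hH β j - 0)) ≤ 1 := by
    rw [sub_zero, ← mul_div_assoc, ← sq]
    exact div_le_one_of_le₀ (rW_pred_sq_le_hH hβ hj) (hH_pos β j).le
  have hconst : rW (j - 1) * (1 + rW (j - 1) / (rW (j - 1) - rW j)) *
      (1 + rW (j - 1) / (hH β j - 0)) / (2 * π) ≤ 1 := by
    rw [hratio, div_le_one (by positivity)]
    linarith [pi_gt_three]
  rw [closure_Srect hj] at hF
  rw [← setIntegral_congr_set (closure_Srect_ae_eq hj),
    ← setIntegral_congr_set (closure_Srect_ae_eq hj), closure_Srect hj]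
  exact (setIntegral_pow_four_mul_weight_le (rW_pos j) (by linarith) (hH_pos β j) hF).trans
    (mul_le_of_le_one_left (sq_nonneg _) hconst)

theorem integrableOn_Ddom_weightedEnergy (hF : ∀ p ∈ closure (Ddom β m), ContDiffAt ℝ 1 F p) :
    IntegrableOn (fun p => weightedEnergy F p * (2 * π * p.1)) (Ddom β m) :=
  integrableOn_Ddom fun p hp => ((continuousAt_weightedEnergy (hF p hp)
    (fst_pos_of_mem_closure_Ddom hp).ne').mul (by fun_prop)).continuousWithinAt

theorem cylIntegral_sq_le (hF : ∀ p ∈ closure (Ddom β m), ContDiffAt ℝ 1 F p) :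
    (cylIntegral β m fun p => F p ^ 2) ≤ cylIntegral β m (weightedEnergy F) := by
  have hFc : ContinuousOn F (closure (Ddom β m)) :=
    fun p hp => (hF p hp).continuousAt.continuousWithinAt
  refine setIntegral_mono_on (integrableOn_Ddom (by fun_prop))
    (integrableOn_Ddom_weightedEnergy hF) measurableSet_Ddom fun p hp => ?_
  have hr := fst_pos_of_mem_closure_Ddom (subset_closure hp)
  gcongr
  exact sq_le_weightedEnergy hr (fst_mem_of_mem_closure_Ddom (subset_closure hp)).2

theorem cylIntegral_pow_four_le (hβ : β ≤ 2) (hF : ∀ p ∈ closure (Ddom β m), ContDiffAt ℝ 1 F p) :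
    (cylIntegral β m fun p => F p ^ 4) ≤ cylIntegral β m (weightedEnergy F) ^ 2 := by
  have hFc : ContinuousOn F (closure (Ddom β m)) :=
    fun p hp => (hF p hp).continuousAt.continuousWithinAt
  rw [cylIntegral, cylIntegral, setIntegral_Ddom (integrableOn_Ddom (by fun_prop)),
    setIntegral_Ddom (integrableOn_Ddom_weightedEnergy hF)]
  calc ∑ j ∈ Finset.Icc 1 m, ∫ p in Srect β j, F p ^ 4 * (2 * π * p.1)
      ≤ ∑ j ∈ Finset.Icc 1 m, (∫ p in Srect β j, weightedEnergy F p * (2 * π * p.1)) ^ 2 :=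
        Finset.sum_le_sum fun j hj => setIntegral_Srect_pow_four_le hβ (Finset.mem_Icc.1 hj).1
          fun p hp => hF p (closure_mono (Srect_subset_Ddom hj) hp)
    _ ≤ (∑ j ∈ Finset.Icc 1 m, ∫ p in Srect β j, weightedEnergy F p * (2 * π * p.1)) ^ 2 :=
        Finset.sum_sq_le_sq_sum_of_nonneg fun j _ =>
          setIntegral_nonneg measurableSet_Srect fun p hp => by
            have hr : 0 < p.1 := (rW_pos j).trans_le hp.1
            exact mul_nonneg weightedEnergy_nonneg (by positivity)

theorem cylIntegral_abs_rpow_le (hF : ContinuousOn F (closure (Ddom β m))) {q : ℝ}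
    (hq : q ∈ Icc 2 4) :
    (cylIntegral β m fun p => |F p| ^ q) ≤
      (cylIntegral β m fun p => F p ^ 2) ^ ((4 - q) / 2) *
        (cylIntegral β m fun p => F p ^ 4) ^ ((q - 2) / 2) := by
  have hweight : 0 ≤ᵐ[volume.restrict (Ddom β m)] fun p : ℝ × ℝ => 2 * π * p.1 := by
    filter_upwards [ae_restrict_mem measurableSet_Ddom] with p hp
    have hr := fst_pos_of_mem_closure_Ddom (subset_closure hp)
    positivity
  have hinterp := integral_abs_rpow_mul_le (f := F) hweight (p := 2) (q := 4)
    (s := (4 - q) / 2) (t := (q - 2) / 2) (by norm_num) (by norm_num)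
    (by linarith [hq.2]) (by linarith [hq.1]) (by ring)
  rw [show 2 * ((4 - q) / 2) + 4 * ((q - 2) / 2) = q by ring] at hinterp
  simp only [rpow_ofNat, sq_abs, (by decide : Even 4).pow_abs] at hinterp
  exact hinterp (integrableOn_Ddom (by fun_prop)) (integrableOn_Ddom (by fun_prop))

end SteppedDomain

theorem uniform_weighted_sobolev_general {β q : ℝ} (hβ : β ≤ 2) (hq : q ∈ Icc 2 4) {m : ℕ}
    {F : ℝ × ℝ → ℝ} (hF : ∀ p ∈ closure (Ddom β m), ContDiffAt ℝ 1 F p) :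
    (cylIntegral β m fun p => |F p| ^ q) ^ (2 / q) ≤ cylIntegral β m (weightedEnergy F) := by
  obtain ⟨hq₂, hq₄⟩ := hq
  set T := cylIntegral β m (weightedEnergy F)
  have hT : 0 ≤ T := cylIntegral_nonneg fun _ => weightedEnergy_nonneg
  have hpow : (cylIntegral β m fun p => |F p| ^ q) ≤ T ^ (q / 2) :=
    calc (cylIntegral β m fun p => |F p| ^ q)
        ≤ (cylIntegral β m fun p => F p ^ 2) ^ ((4 - q) / 2) *
          (cylIntegral β m fun p => F p ^ 4) ^ ((q - 2) / 2) :=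
          cylIntegral_abs_rpow_le
            (fun p hp => (hF p hp).continuousAt.continuousWithinAt) ⟨hq₂, hq₄⟩
      _ ≤ T ^ ((4 - q) / 2) * (T ^ 2) ^ ((q - 2) / 2) := by
          refine mul_le_mul (rpow_le_rpow ?_ (cylIntegral_sq_le hF) (by linarith))
            (rpow_le_rpow ?_ (cylIntegral_pow_four_le hβ hF) (by linarith))
            (rpow_nonneg ?_ _) (rpow_nonneg hT _) <;>
          exact cylIntegral_nonneg fun p => by positivity
      _ = T ^ (q / 2) := by
          rw [← rpow_natCast_mul hT, ← rpow_add_of_nonneg hT (by linarith)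
            (by push_cast; linarith)]
          ring_nf
  calc (cylIntegral β m fun p => |F p| ^ q) ^ (2 / q) ≤ (T ^ (q / 2)) ^ (2 / q) :=
        rpow_le_rpow (cylIntegral_nonneg fun p => by positivity) hpow (by positivity)
    _ = T := by
        rw [← rpow_mul hT, div_mul_div_cancel₀ two_ne_zero, div_self (by linarith), rpow_one]

/-- Uniform weighted Sobolev inequality on `D_m` with exponent `13/5`. -/
theorem uniform_weighted_sobolev :
    ∃ Cs : ℝ, 0 < Cs ∧
      ∀ (β : ℝ), 1 < β → β ≤ 1.1 →
      ∀ (m : ℕ), 1 ≤ m →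
      ∀ F : ℝ × ℝ → ℝ,
        (∃ U : Set (ℝ × ℝ), IsOpen U ∧ closure (Ddom β m) ⊆ U ∧ ContDiffOn ℝ 1 F U) →
        (cylIntegral β m fun p => |F p| ^ ((13 : ℝ) / 5)) ^ ((10 : ℝ) / 13) ≤
          Cs * cylIntegral β m
            (fun p => (pdr F p) ^ 2 + (pdz F p) ^ 2 + (F p) ^ 2 / p.1 ^ 2) := by
  refine ⟨1, one_pos, fun β _ hβ m _ F ⟨U, hU, hDU, hF⟩ => ?_⟩
  rw [one_mul, show (10 : ℝ) / 13 = 2 / (13 / 5) by norm_num]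
  exact uniform_weighted_sobolev_general (by linarith) (by norm_num)
    fun p hp => hF.contDiffAt (hU.mem_nhds (hDU hp))
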